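/- For all sufficiently large real x, 2x log x + O(x) ≤ ∑_{p ≤ 4x² + 1} (log p) · #{ n ∈ ℤ : x ≤ n ≤ 2x and n² + 1 ≡ 0 (mod p) }; that is, there is a constant K such that ∑_{p ≤ 4x²+1} (log p) · #{x ≤ n ≤ 2x : p ∣ n² + 1} ≥ 2x log x − K x. -/

import Mathlib

/-!
Expanding `log (n² + 1) = ∑_{d ∣ n² + 1} Λ(d)` and summing over the integers `n ∈ [x, y]` gives
`∑_d Λ(d) · #{n ∈ [x, y] : d ∣ n² + 1} ≥ 2 (y - x - 1) log x`. The primes `d` contribute the sum to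
be bounded. Modulo a prime power, `-1` has at most two square roots, so the other prime powers `d`
contribute at most `∑ Λ(d) (2 (y - x) / d + 2)` over non-primes `d ≤ y² + 1`, which is `O(y)`
because `∑ Λ(d) / d` over the non-primes converges and `ψ(t) - θ(t) = O(√t)`.
-/

open Finset Real Chebyshev
open ArithmeticFunction hiding log

section IntegerPoints

variable {K : Type*} [Field K] [LinearOrder K] [IsStrictOrderedRing K] [FloorRing K] {x y : K}

lemma sub_sub_one_le_card_Icc_ceil_floor (x y : K) :
    y - x - 1 ≤ (#(Icc ⌈x⌉ ⌊y⌋) : K) := by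
  have hcard : (⌊y⌋ + 1 - ⌈x⌉ : K) ≤ (#(Icc ⌈x⌉ ⌊y⌋) : K) := by
    rw [Int.card_Icc]
    exact_mod_cast Int.self_le_toNat (⌊y⌋ + 1 - ⌈x⌉)
  linarith [Int.ceil_lt_add_one x, Int.lt_floor_add_one y]

lemma card_Icc_ceil_floor_le (hxy : x ≤ y) : (#(Icc ⌈x⌉ ⌊y⌋) : K) ≤ y - x + 1 := by
  have hcard : (#(Icc ⌈x⌉ ⌊y⌋) : K) = max (⌊y⌋ + 1 - ⌈x⌉ : K) 0 := by
    rw [Int.card_Icc]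
    exact_mod_cast congrArg (Int.cast (R := K)) (Int.toNat_eq_max (⌊y⌋ + 1 - ⌈x⌉))
  rw [hcard]
  exact max_le (by linarith [Int.le_ceil x, Int.floor_le y]) (by linarith)

lemma card_Icc_filter_modEq_le (hxy : x ≤ y) {r : ℤ} (hr : 0 < r) (v : ℤ) :
    (#{n ∈ Icc ⌈x⌉ ⌊y⌋ | n ≡ v [ZMOD r]} : K) ≤ (y - x) / r + 1 := by
  have hr' : (0 : K) < r := by exact_mod_cast hr
  have hsub : {n ∈ Icc ⌈x⌉ ⌊y⌋ | n ≡ v [ZMOD r]} ⊆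
      (Icc ⌈(x - v) / r⌉ ⌊(y - v) / r⌋).image fun k ↦ v + r * k := by
    intro n hn
    obtain ⟨hmem, hmod⟩ := mem_filter.1 hn
    obtain ⟨k, hk⟩ := hmod.symm.dvd
    obtain rfl : n = v + r * k := by linarith
    rw [mem_Icc, Int.ceil_le, Int.le_floor] at hmem
    push_cast at hmem
    refine mem_image_of_mem _ (mem_Icc.2 ⟨?_, ?_⟩)
    · rw [Int.ceil_le, div_le_iff₀ hr']
      linarith
    · rw [Int.le_floor, le_div_iff₀ hr']
      linarith
  calc (#{n ∈ Icc ⌈x⌉ ⌊y⌋ | n ≡ v [ZMOD r]} : K)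
      ≤ #(Icc ⌈(x - v) / r⌉ ⌊(y - v) / r⌋) := by
        exact_mod_cast (card_le_card hsub).trans card_image_le
    _ ≤ (y - v) / r - (x - v) / r + 1 := card_Icc_ceil_floor_le (by gcongr)
    _ = (y - x) / r + 1 := by ring

end IntegerPoints

section SquareRoots

lemma pow_dvd_sub_or_pow_dvd_add_of_dvd_sq_sub_sq {R : Type*} [CommRing R] [IsCancelMulZero R]
    {p a b : R} (hp : Prime p) (hb : ¬p ∣ 2 * b) {k : ℕ} (h : p ^ k ∣ a ^ 2 - b ^ 2) :
    p ^ k ∣ a - b ∨ p ^ k ∣ a + b := by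
  rw [sq_sub_sq] at h
  by_cases hadd : p ∣ a + b
  · have hsub : ¬p ∣ a - b := fun hsub ↦ hb (by
      have := dvd_sub hadd hsub
      rwa [show a + b - (a - b) = 2 * b by ring] at this)
    exact .inr (hp.pow_dvd_of_dvd_mul_right k hsub h)
  · exact .inl (hp.pow_dvd_of_dvd_mul_left k hadd h)

lemma not_four_dvd_sq_add_one (m : ℤ) : ¬4 ∣ m ^ 2 + 1 := by
  obtain ⟨c, rfl | rfl⟩ := Int.even_or_odd' m <;> ring_nf <;> omega

lemma modEq_or_modEq_neg_of_dvd_sq_add_one {d : ℕ} (hd : IsPrimePow d) {m n : ℤ}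
    (hm : (d : ℤ) ∣ m ^ 2 + 1) (hn : (d : ℤ) ∣ n ^ 2 + 1) :
    n ≡ m [ZMOD d] ∨ n ≡ -m [ZMOD d] := by
  obtain ⟨p, k, hp, hk, rfl⟩ := (isPrimePow_nat_iff d).1 hd
  have hpZ : Prime (p : ℤ) := Nat.prime_iff_prime_int.1 hp
  push_cast at hm hn ⊢
  have hpm : ¬(p : ℤ) ∣ m := fun h ↦ hpZ.not_dvd_one <|
    (Int.dvd_add_right (h.trans (dvd_pow_self m two_ne_zero))).1
      ((dvd_pow_self _ hk.ne').trans hm)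
  have hsq : (p : ℤ) ^ k ∣ n ^ 2 - m ^ 2 := by simpa using dvd_sub hn hm
  suffices h : (p : ℤ) ^ k ∣ n - m ∨ (p : ℤ) ^ k ∣ n + m from
    h.imp (fun h ↦ (Int.modEq_iff_dvd.2 h).symm)
      fun h ↦ (Int.modEq_iff_dvd.2 (by rwa [sub_neg_eq_add])).symm
  by_cases h2m : (p : ℤ) ∣ 2 * m
  · obtain rfl : p = 2 := (Nat.prime_dvd_prime_iff_eq hp Nat.prime_two).1 <| by
      exact_mod_cast (hpZ.dvd_or_dvd h2m).resolve_right hpm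
    obtain rfl : k = 1 := by
      by_contra hk1
      exact not_four_dvd_sq_add_one m ((pow_dvd_pow (2 : ℤ) (show 2 ≤ k by omega)).trans hm)
    rw [pow_one, sq_sub_sq, mul_comm] at hsq
    simpa only [pow_one] using hpZ.dvd_or_dvd hsq
  · exact pow_dvd_sub_or_pow_dvd_add_of_dvd_sq_sub_sq hpZ h2m hsq

lemma card_Icc_filter_dvd_sq_add_one_le {K : Type*} [Field K] [LinearOrder K]
    [IsStrictOrderedRing K] [FloorRing K] {x y : K} (hxy : x ≤ y) {d : ℕ} (hd : IsPrimePow d) :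
    (#{n ∈ Icc ⌈x⌉ ⌊y⌋ | (d : ℤ) ∣ n ^ 2 + 1} : K) ≤ 2 * (y - x) / d + 2 := by
  have hclass (v : ℤ) : (#{n ∈ Icc ⌈x⌉ ⌊y⌋ | n ≡ v [ZMOD d]} : K) ≤ (y - x) / d + 1 := by
    simpa using card_Icc_filter_modEq_le hxy (Int.natCast_pos.2 hd.pos) v
  obtain hempty | ⟨m, hm⟩ := {n ∈ Icc ⌈x⌉ ⌊y⌋ | (d : ℤ) ∣ n ^ 2 + 1}.eq_empty_or_nonempty
  · have : 0 ≤ y - x := sub_nonneg.2 hxy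
    rw [hempty, card_empty, Nat.cast_zero]
    positivity
  · have hsub : {n ∈ Icc ⌈x⌉ ⌊y⌋ | (d : ℤ) ∣ n ^ 2 + 1} ⊆
        {n ∈ Icc ⌈x⌉ ⌊y⌋ | n ≡ m [ZMOD d]} ∪ {n ∈ Icc ⌈x⌉ ⌊y⌋ | n ≡ -m [ZMOD d]} := by
      rw [← filter_or]
      exact monotone_filter_right _ fun n _ hn ↦
        modEq_or_modEq_neg_of_dvd_sq_add_one hd (mem_filter.1 hm).2 hn
    calc (#{n ∈ Icc ⌈x⌉ ⌊y⌋ | (d : ℤ) ∣ n ^ 2 + 1} : K)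
        ≤ #{n ∈ Icc ⌈x⌉ ⌊y⌋ | n ≡ m [ZMOD d]} + #{n ∈ Icc ⌈x⌉ ⌊y⌋ | n ≡ -m [ZMOD d]} := by
          exact_mod_cast (card_le_card hsub).trans (card_union_le _ _)
      _ ≤ ((y - x) / d + 1) + ((y - x) / d + 1) := add_le_add (hclass m) (hclass (-m))
      _ = 2 * (y - x) / d + 2 := by ring

end SquareRoots

section VonMangoldt

lemma sum_log_eq_sum_vonMangoldt_mul_card {ι : Type*} (s : Finset ι) (f : ι → ℤ) {t : ℝ}
    (hf : ∀ i ∈ s, f i ≠ 0) (ht : ∀ i ∈ s, |(f i : ℝ)| ≤ t) :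
    ∑ i ∈ s, log (f i) = ∑ d ∈ Ioc 0 ⌊t⌋₊, Λ d * #{i ∈ s | (d : ℤ) ∣ f i} := by
  have hdivisors : ∀ i ∈ s,
      (f i).natAbs.divisors = {d ∈ Ioc 0 ⌊t⌋₊ | ((d : ℕ) : ℤ) ∣ f i} := by
    intro i hi
    have hpos : 0 < (f i).natAbs := Int.natAbs_pos.2 (hf i hi)
    have hle : (f i).natAbs ≤ ⌊t⌋₊ := Nat.le_floor (by simpa [Nat.cast_natAbs] using ht i hi)
    ext d
    simp only [Nat.mem_divisors, mem_filter, mem_Ioc, Int.natCast_dvd]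
    exact ⟨fun ⟨hd, _⟩ ↦ ⟨⟨Nat.pos_of_dvd_of_pos hd hpos, (Nat.le_of_dvd hpos hd).trans hle⟩, hd⟩,
      fun ⟨_, hd⟩ ↦ ⟨hd, hpos.ne'⟩⟩
  calc ∑ i ∈ s, log (f i)
      = ∑ i ∈ s, ∑ d ∈ Ioc 0 ⌊t⌋₊, if (d : ℤ) ∣ f i then Λ d else 0 := by
        refine sum_congr rfl fun i hi ↦ ?_
        rw [← sum_filter, ← hdivisors i hi, vonMangoldt_sum, Nat.cast_natAbs, Int.cast_abs, log_abs]
    _ = ∑ d ∈ Ioc 0 ⌊t⌋₊, Λ d * #{i ∈ s | (d : ℤ) ∣ f i} := by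
        rw [sum_comm]
        refine sum_congr rfl fun d _ ↦ ?_
        rw [← sum_filter, sum_const, nsmul_eq_mul, mul_comm]

lemma sum_vonMangoldt_mul_eq_sum_primesLE_add (N : ℕ) (g : ℕ → ℝ) :
    ∑ d ∈ Ioc 0 N, Λ d * g d =
      ∑ p ∈ N.primesLE, log p * g p + ∑ d ∈ Ioc 0 N with ¬d.Prime, Λ d * g d := by
  rw [← sum_filter_add_sum_filter_not _ Nat.Prime, ← Nat.primesLE_eq_filter_Ioc_zero]
  congr 1
  exact sum_congr rfl fun p hp ↦ by rw [vonMangoldt_apply_prime (Nat.prime_of_mem_primesLE hp)]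

lemma summable_vonMangoldt_not_prime_div :
    Summable fun n : ℕ ↦ (if n.Prime then 0 else Λ n) / (n : ℝ) := by
  refine (vonMangoldt.summable_residueClass_non_primes_div (1 : ZMod 1)).congr fun n ↦ ?_
  simp [vonMangoldt.residueClass, Subsingleton.elim (n : ZMod 1) 1]

lemma exists_sum_vonMangoldt_not_prime_mul_le :
    ∃ C : ℝ, 0 ≤ C ∧ ∀ (g : ℕ → ℝ) (A B t : ℝ), 0 ≤ A → 0 ≤ B →
      (∀ d, IsPrimePow d → ¬d.Prime → g d ≤ A / d + B) →
        ∑ d ∈ Ioc 0 ⌊t⌋₊ with ¬d.Prime, Λ d * g d ≤ C * (A + B * √t) := by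
  obtain ⟨C, hC⟩ := psi_sub_theta_le_mul_sqrt
  let w : ℕ → ℝ := fun d ↦ (if d.Prime then 0 else Λ d) / d
  have w_nonneg (d : ℕ) : 0 ≤ w d :=
    div_nonneg (by split_ifs <;> simp [vonMangoldt_nonneg]) d.cast_nonneg
  refine ⟨max (∑' d, w d) C, le_max_of_le_left (tsum_nonneg w_nonneg),
    fun g A B t hA hB hg ↦ ?_⟩
  have hterm : ∀ d ∈ {d ∈ Ioc 0 ⌊t⌋₊ | ¬d.Prime}, Λ d * g d ≤ A * w d + B * Λ d := by
    intro d hd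
    have hd_prime : ¬d.Prime := (mem_filter.1 hd).2
    by_cases hd_pow : IsPrimePow d
    · calc Λ d * g d ≤ Λ d * (A / d + B) :=
            mul_le_mul_of_nonneg_left (hg d hd_pow hd_prime) vonMangoldt_nonneg
        _ = A * w d + B * Λ d := by simp only [w, if_neg hd_prime]; ring
    · simp [w, vonMangoldt_eq_zero_iff.2 hd_pow]
  calc ∑ d ∈ Ioc 0 ⌊t⌋₊ with ¬d.Prime, Λ d * g d
      ≤ ∑ d ∈ Ioc 0 ⌊t⌋₊ with ¬d.Prime, (A * w d + B * Λ d) := sum_le_sum hterm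
    _ = A * ∑ d ∈ Ioc 0 ⌊t⌋₊ with ¬d.Prime, w d + B * (ψ t - θ t) := by
        rw [sum_add_distrib, ← mul_sum, ← mul_sum, psi_sub_theta_eq_sum_not_prime]
    _ ≤ A * ∑' d, w d + B * (C * √t) := by
        gcongr
        · exact summable_vonMangoldt_not_prime_div.sum_le_tsum _ fun d _ ↦ w_nonneg d
        · exact hC t
    _ ≤ A * max (∑' d, w d) C + B * (max (∑' d, w d) C * √t) := by
        gcongr
        exacts [le_max_left _ _, le_max_right _ _]
    _ = max (∑' d, w d) C * (A + B * √t) := by ring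

end VonMangoldt

lemma sub_sub_one_mul_two_mul_log_le_sum_log {x : ℝ} (hx : 1 ≤ x) (y : ℝ) :
    (y - x - 1) * (2 * log x) ≤ ∑ n ∈ Icc ⌈x⌉ ⌊y⌋, log ((n ^ 2 + 1 : ℤ) : ℝ) := by
  have hlog : ∀ n ∈ Icc ⌈x⌉ ⌊y⌋, 2 * log x ≤ log ((n ^ 2 + 1 : ℤ) : ℝ) := by
    intro n hn
    have hxn : x ≤ n := Int.ceil_le.1 (mem_Icc.1 hn).1
    calc 2 * log x = log (x ^ 2) := by rw [log_pow, Nat.cast_ofNat]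
      _ ≤ log ((n ^ 2 + 1 : ℤ) : ℝ) := log_le_log (by positivity) (by push_cast; nlinarith)
  calc (y - x - 1) * (2 * log x) ≤ #(Icc ⌈x⌉ ⌊y⌋) * (2 * log x) := by
        gcongr
        · exact mul_nonneg zero_le_two (log_nonneg hx)
        · exact sub_sub_one_le_card_Icc_ceil_floor x y
    _ ≤ ∑ n ∈ Icc ⌈x⌉ ⌊y⌋, log ((n ^ 2 + 1 : ℤ) : ℝ) := by
        rw [← nsmul_eq_mul]
        exact card_nsmul_le_sum _ _ _ hlog

theorem weighted_prime_count_lower_bound_general :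
    ∃ K : ℝ, ∀ x y : ℝ, 1 ≤ x → x ≤ y →
      2 * (y - x) * log x - K * y ≤
        ∑ p ∈ ⌊y ^ 2 + 1⌋₊.primesLE, log p * #{n ∈ Icc ⌈x⌉ ⌊y⌋ | (p : ℤ) ∣ n ^ 2 + 1} := by
  obtain ⟨C, hC_nonneg, hC⟩ := exists_sum_vonMangoldt_not_prime_mul_le
  refine ⟨2 + 6 * C, fun x y hx hxy ↦ ?_⟩
  let c : ℕ → ℝ := fun d ↦ #{n ∈ Icc ⌈x⌉ ⌊y⌋ | (d : ℤ) ∣ n ^ 2 + 1}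
  have hsize : ∀ n ∈ Icc ⌈x⌉ ⌊y⌋, |((n ^ 2 + 1 : ℤ) : ℝ)| ≤ y ^ 2 + 1 := by
    intro n hn
    rw [mem_Icc, Int.ceil_le, Int.le_floor] at hn
    rw [abs_of_nonneg (by positivity)]
    push_cast
    nlinarith
  have hexpand : ∑ n ∈ Icc ⌈x⌉ ⌊y⌋, log ((n ^ 2 + 1 : ℤ) : ℝ) =
      ∑ p ∈ ⌊y ^ 2 + 1⌋₊.primesLE, log p * c p +
        ∑ d ∈ Ioc 0 ⌊y ^ 2 + 1⌋₊ with ¬d.Prime, Λ d * c d := by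
    rw [sum_log_eq_sum_vonMangoldt_mul_card _ _ (fun n _ ↦ by positivity) hsize]
    exact sum_vonMangoldt_mul_eq_sum_primesLE_add _ c
  have hnonprime : ∑ d ∈ Ioc 0 ⌊y ^ 2 + 1⌋₊ with ¬d.Prime, Λ d * c d ≤ 6 * C * y :=
    calc _ ≤ C * (2 * (y - x) + 2 * √(y ^ 2 + 1)) := hC c _ _ _ (by linarith) zero_le_two
            fun d hd _ ↦ card_Icc_filter_dvd_sq_add_one_le hxy hd
      _ ≤ C * (2 * y + 2 * (2 * y)) := by
        gcongr
        · linarith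
        · exact sqrt_le_iff.2 ⟨by linarith, by nlinarith⟩
      _ = 6 * C * y := by ring
  have hlog : log x ≤ y := (log_le_self (by linarith)).trans hxy
  linarith [sub_sub_one_mul_two_mul_log_le_sum_log hx y]

/-- For all sufficiently large real `x`,
`2x log x + O(x) ≤ ∑_{p ≤ 4x² + 1} (log p) · #{n ∈ ℤ : x ≤ n ≤ 2x, p ∣ n² + 1}`. -/
theorem weighted_prime_count_lower_bound :
    ∃ K : ℝ, ∃ x₀ : ℝ, ∀ x : ℝ, x₀ ≤ x →
      (∑ p ∈ (Finset.range (⌊4 * x ^ 2 + 1⌋₊ + 1)).filter Nat.Prime,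
          Real.log p *
            (((Finset.Icc ⌈x⌉ ⌊2 * x⌋).filter
              (fun n => (p : ℤ) ∣ n ^ 2 + 1)).card : ℝ))
        ≥ 2 * x * Real.log x - K * x := by
  obtain ⟨K, hK⟩ := weighted_prime_count_lower_bound_general
  refine ⟨2 * K, 1, fun x hx ↦ ?_⟩
  rw [← Nat.primesLE_eq_filter_range]
  convert hK x (2 * x) hx (by linarith) using 2 <;> ring_nf
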